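/- For every finite-dimensional Λ-module M, one has reverse(rad(M)) ≼ socseq(M) and reverse(socseq(M)) ≼ rad(M) in the dominance order on ℕ^{L+1}. -/

import Mathlib

noncomputable section

/-- The relation on the free algebra killing all products of `L+1` generators. -/
def TruncRel (K : Type*) [Field K] (r L : ℕ) :
    FreeAlgebra K (Fin r) → FreeAlgebra K (Fin r) → Prop := fun a b =>
  (∃ f : Fin (L + 1) → Fin r, a = (List.ofFn fun j => FreeAlgebra.ι K (f j)).prod) ∧ b = 0

/-- The local truncated path algebra with `r` loops and Loewy length `L+1`:
the quotient of `K⟨X_1,…,X_r⟩` by the two-sided ideal generated by all products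
of `L+1` generators. -/
def TruncAlg (K : Type*) [Field K] (r L : ℕ) : Type _ := RingQuot (TruncRel K r L)

instance (K : Type*) [Field K] (r L : ℕ) : Ring (TruncAlg K r L) :=
  inferInstanceAs (Ring (RingQuot _))

instance (K : Type*) [Field K] (r L : ℕ) : Algebra K (TruncAlg K r L) :=
  inferInstanceAs (Algebra K (RingQuot _))

/-- The images of the generators `X i` in the truncated algebra. -/
def gen (K : Type*) [Field K] (r L : ℕ) (i : Fin r) : TruncAlg K r L :=
  RingQuot.mkAlgHom K (TruncRel K r L) (FreeAlgebra.ι K i)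

/-- The two-sided ideal `J` of `Λ` generated by the images of `X_1,…,X_r`,
realized as a `K`-submodule of `Λ`. -/
def Jrad (K : Type*) [Field K] (r L : ℕ) : Submodule K (TruncAlg K r L) :=
  ⊤ * Submodule.span K (Set.range (gen K r L)) * ⊤

/-- `J^l M`, the submodule of `M` given by the action of `J^l`. -/
def jpow (K : Type*) [Field K] (r L : ℕ) (M : Type*) [AddCommGroup M] [Module K M]
    [Module (TruncAlg K r L) M] [IsScalarTower K (TruncAlg K r L) M] (l : ℕ) :
    Submodule (TruncAlg K r L) M :=
  Submodule.span (TruncAlg K r L)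
    {x : M | ∃ a ∈ (Jrad K r L ^ l : Submodule K (TruncAlg K r L)), ∃ m : M, x = a • m}

/-- The socle of a module: the supremum of all simple submodules. -/
def socle (R N : Type*) [Ring R] [AddCommGroup N] [Module R N] : Submodule R N :=
  sSup {p : Submodule R N | IsSimpleModule R ↥p}

/-- The socle series: `socSeries R M l` is `soc_{l-1} M`, so `socSeries R M 0 = soc_{-1} M = ⊥`
and `socSeries R M (l+1) = soc_l M` is the preimage in `M` of `soc (M / soc_{l-1} M)`. -/
def socSeries (R M : Type*) [Ring R] [AddCommGroup M] [Module R M] : ℕ → Submodule R M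
  | 0 => ⊥
  | l + 1 => Submodule.comap (socSeries R M l).mkQ (socle R (M ⧸ socSeries R M l))

/-- Dimension of the subquotient `q / (p ⊓ q)`; for `p ≤ q` this is `dim (q/p)`. -/
def quotDim (K M : Type*) [Field K] [AddCommGroup M] [Module K M]
    (p q : Submodule K M) : ℕ :=
  Module.finrank K (↥q ⧸ Submodule.comap q.subtype p)

/-- The radical layering `rad(M) = (dim_K J^l M / J^{l+1} M)_{l=0,…,L}`. -/
def radLayering (K : Type*) [Field K] (r L : ℕ) (M : Type*) [AddCommGroup M] [Module K M]
    [Module (TruncAlg K r L) M] [IsScalarTower K (TruncAlg K r L) M] : Fin (L + 1) → ℕ :=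
  fun l => quotDim K M ((jpow K r L M ((l : ℕ) + 1)).restrictScalars K)
    ((jpow K r L M (l : ℕ)).restrictScalars K)

/-- The socle layering `socseq(M) = (dim_K soc_l M / soc_{l-1} M)_{l=0,…,L}`. -/
def socLayering (K : Type*) [Field K] (r L : ℕ) (M : Type*) [AddCommGroup M] [Module K M]
    [Module (TruncAlg K r L) M] [IsScalarTower K (TruncAlg K r L) M] : Fin (L + 1) → ℕ :=
  fun l => quotDim K M ((socSeries (TruncAlg K r L) M (l : ℕ)).restrictScalars K)
    ((socSeries (TruncAlg K r L) M ((l : ℕ) + 1)).restrictScalars K)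

/-- The dominance order on `ℕ^{L+1}`: `a ≼ b` iff all partial sums satisfy `≤`. -/
def DomLE (L : ℕ) (a b : Fin (L + 1) → ℕ) : Prop :=
  ∀ l : Fin (L + 1), ∑ j ∈ Finset.Iic l, a j ≤ ∑ j ∈ Finset.Iic l, b j

/-- `reverse (a_0, …, a_L) = (a_L, …, a_0)`. -/
def revTuple (L : ℕ) (a : Fin (L + 1) → ℕ) : Fin (L + 1) → ℕ := fun l => a l.rev

/-!
Both series are compared through the single inclusion `J ^ (L + 1 - l) M ≤ soc_{l-1} M`. It holds
by induction on `l`: since `Λ = K ⊕ J`, every vector killed by `J` spans a simple submodule, so a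
submodule `N` with `J N ≤ soc_{l-1} M` is contained in `soc_l M`. Taking dimensions gives
`reverse (rad M) ≼ socseq M`. Both tuples have total `dim M`, and reversing two tuples with equal
totals reverses the dominance order, which gives the second relation.
-/

section DominanceOrder

variable {L : ℕ} {a b : Fin (L + 1) → ℕ}

theorem revTuple_revTuple (a : Fin (L + 1) → ℕ) : revTuple L (revTuple L a) = a :=
  funext fun l => congrArg a l.rev_rev

theorem sum_Iic_revTuple (a : Fin (L + 1) → ℕ) (l : Fin (L + 1)) :
    ∑ j ∈ Finset.Iic l, revTuple L a j = ∑ j ∈ Finset.Ici l.rev, a j := by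
  rw [← Fin.map_revPerm_Iic, Finset.sum_map]
  rfl

theorem DomLE.sum_Iio_le (h : DomLE L a b) (l : Fin (L + 1)) :
    ∑ j ∈ Finset.Iio l, a j ≤ ∑ j ∈ Finset.Iio l, b j := by
  cases l using Fin.cases with
  | zero =>
    have hi : Finset.Iio (0 : Fin (L + 1)) = ∅ := Finset.Iio_bot
    simp only [hi, Finset.sum_empty, le_refl]
  | succ i =>
    have hi : Finset.Iio i.succ = Finset.Iic i.castSucc := by
      ext j
      simp [Fin.le_castSucc_iff]
    simpa only [hi] using h i.castSucc

theorem DomLE.revTuple_of_sum_eq (h : DomLE L a b) (hab : ∑ j, a j = ∑ j, b j) :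
    DomLE L (revTuple L b) (revTuple L a) := by
  intro l
  have sum_split (c : Fin (L + 1) → ℕ) :
      ∑ j ∈ Finset.Iio l.rev, c j + ∑ j ∈ Finset.Ici l.rev, c j = ∑ j, c j := by
    have compl_Iio : (Finset.Iio l.rev)ᶜ = Finset.Ici l.rev := by
      ext j
      simp
    rw [← compl_Iio, Finset.sum_add_sum_compl]
  rw [sum_Iic_revTuple, sum_Iic_revTuple]
  linarith [sum_split a, sum_split b, h.sum_Iio_le l.rev]

end DominanceOrder

section Layering

variable {K V : Type*} [Field K] [AddCommGroup V] [Module K V]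

/-- The tuple of dimensions of the layers `F (l + 1) / F l`, `l = 0, …, L`, of an ascending
filtration `F 0 ≤ F 1 ≤ ⋯ ≤ F (L + 1)`. It treats the socle series and the reversed radical series
on the same footing; `F` is indexed by `ℕ`, and its values beyond `L + 1` do not enter. -/
def layering (L : ℕ) (F : ℕ → Submodule K V) : Fin (L + 1) → ℕ :=
  fun l => quotDim K V (F l) (F (l + 1))

variable [FiniteDimensional K V] {F G : ℕ → Submodule K V} {L : ℕ}

theorem quotDim_eq_finrank_sub {p q : Submodule K V} (h : p ≤ q) :
    quotDim K V p q = Module.finrank K q - Module.finrank K p := by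
  rw [quotDim, Submodule.finrank_quotient, (Submodule.comapSubtypeEquivOfLe h).finrank_eq]

theorem sum_Iic_layering (hF : Monotone F) (hF₀ : F 0 = ⊥) (l : Fin (L + 1)) :
    ∑ j ∈ Finset.Iic l, layering L F j = Module.finrank K (F (l + 1)) := by
  calc ∑ j ∈ Finset.Iic l, layering L F j
      = ∑ j ∈ Finset.range (l + 1), quotDim K V (F j) (F (j + 1)) := by
        rw [Nat.range_succ_eq_Iic, ← Fin.map_valEmbedding_Iic, Finset.sum_map]
        rfl
    _ = ∑ j ∈ Finset.range (l + 1), (Module.finrank K (F (j + 1)) - Module.finrank K (F j)) :=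
        Finset.sum_congr rfl fun j _ => quotDim_eq_finrank_sub (hF j.le_succ)
    _ = Module.finrank K (F (l + 1)) := by
        rw [Finset.sum_range_tsub fun _ _ h => Submodule.finrank_mono (hF h), hF₀, finrank_bot,
          Nat.sub_zero]

theorem sum_layering (hF : Monotone F) (hF₀ : F 0 = ⊥) (hF₁ : F (L + 1) = ⊤) :
    ∑ j, layering L F j = Module.finrank K V := by
  rw [← Finset.Iic_top, sum_Iic_layering hF hF₀, Fin.top_eq_last, Fin.val_last, hF₁, finrank_top]

theorem domLE_layering (hF : Monotone F) (hF₀ : F 0 = ⊥) (hG : Monotone G) (hG₀ : G 0 = ⊥)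
    (hFG : ∀ l, F l ≤ G l) : DomLE L (layering L F) (layering L G) := by
  intro l
  rw [sum_Iic_layering hF hF₀, sum_Iic_layering hG hG₀]
  exact Submodule.finrank_mono (hFG _)

end Layering

section PowSMulTop

variable {K A M : Type*} [CommSemiring K] [Semiring A] [Algebra K A]
  [AddCommMonoid M] [Module K M] [Module A M] [IsScalarTower K A M]

theorem pow_smul_top_antitone (J : Submodule K A) :
    Antitone fun l => J ^ l • (⊤ : Submodule K M) := by
  refine antitone_nat_of_succ_le fun l => ?_
  rw [pow_succ, ← smul_eq_mul, Submodule.smul_assoc]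
  exact Submodule.smul_mono le_rfl le_top

theorem top_smul_pow_smul_top_le {J : Submodule K A} (hJ : ⊤ * J ≤ J) (l : ℕ) :
    (⊤ : Submodule K A) • J ^ l • (⊤ : Submodule K M) ≤ J ^ l • ⊤ := by
  cases l with
  | zero => simp only [pow_zero, Submodule.one_smul, le_top]
  | succ l =>
    rw [← Submodule.smul_assoc, smul_eq_mul, pow_succ', ← mul_assoc]
    exact Submodule.smul_mono_left (mul_le_mul_left hJ _)

end PowSMulTop

section SocleSeries

theorem socSeries_monotone (R M : Type*) [Ring R] [AddCommGroup M] [Module R M] :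
    Monotone (socSeries R M) := by
  refine monotone_nat_of_le_succ fun l => ?_
  calc socSeries R M l = (socSeries R M l).mkQ.ker := (Submodule.ker_mkQ _).symm
    _ ≤ socSeries R M (l + 1) := Submodule.comap_mono bot_le

variable {K A M : Type*} [Field K] [Ring A] [Algebra K A]
  [AddCommGroup M] [Module K M] [Module A M] [IsScalarTower K A M] {J : Submodule K A}

variable (K) in
theorem isSimpleModule_span_singleton {x : M} (hx : x ≠ 0) (h : ∀ a : A, ∃ c : K, c • x = a • x) :
    IsSimpleModule A (Submodule.span A {x}) := by
  let x' : Submodule.span A {x} := ⟨x, Submodule.mem_span_singleton_self x⟩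
  have finrank_span : Module.finrank K (Submodule.span A {x}) = 1 := by
    refine (finrank_eq_one_iff_of_nonzero' x' (by simpa [x'] using hx)).2 ?_
    rintro ⟨y, hy⟩
    obtain ⟨a, rfl⟩ := Submodule.mem_span_singleton.1 hy
    obtain ⟨c, hc⟩ := h a
    exact ⟨c, Subtype.ext hc⟩
  exact (isSimpleModule_iff ..).2 (is_simple_module_of_finrank_eq_one finrank_span)

theorem mem_socle_of_smul_eq_zero (hJ : 1 ⊔ J = ⊤) {x : M} (hx : ∀ a ∈ J, a • x = 0) :
    x ∈ socle A M := by
  obtain rfl | hx₀ := eq_or_ne x 0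
  · exact zero_mem _
  have smul_eq (a : A) : ∃ c : K, c • x = a • x := by
    obtain ⟨_, hu, v, hv, rfl⟩ := Submodule.mem_sup.1 (hJ ▸ Submodule.mem_top : a ∈ 1 ⊔ J)
    obtain ⟨c, rfl⟩ := Submodule.mem_one.1 hu
    exact ⟨c, by rw [add_smul, hx v hv, add_zero, algebraMap_smul]⟩
  exact le_sSup (a := Submodule.span A {x}) (isSimpleModule_span_singleton K hx₀ smul_eq)
    (Submodule.mem_span_singleton_self x)

theorem pow_smul_top_le_socSeries (hJ : 1 ⊔ J = ⊤) {n : ℕ} (hn : J ^ n = ⊥) (l : ℕ) :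
    J ^ (n - l) • (⊤ : Submodule K M) ≤ (socSeries A M l).restrictScalars K := by
  induction l with
  | zero => rw [Nat.sub_zero, hn, Submodule.bot_smul]; exact bot_le
  | succ l ih =>
    intro x hx
    refine mem_socle_of_smul_eq_zero hJ fun a ha => ?_
    rw [← map_smul, Submodule.mkQ_apply, Submodule.Quotient.mk_eq_zero]
    have hax : a • x ∈ J ^ (n - (l + 1) + 1) • (⊤ : Submodule K M) := by
      rw [pow_succ', ← smul_eq_mul, Submodule.smul_assoc]
      exact Submodule.smul_mem_smul ha hx
    exact ih (pow_smul_top_antitone J (by lia) hax)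

end SocleSeries

section GeneratedAlgebra

variable {K A : Type*} [CommSemiring K] [Semiring A] [Algebra K A] {s : Set A}

theorem one_sup_span_mul_top (hs : Algebra.adjoin K s = ⊤) :
    1 ⊔ Submodule.span K s * ⊤ = ⊤ := by
  have span_closure : Submodule.span K (Submonoid.closure s : Set A) = ⊤ := by
    rw [← Algebra.adjoin_eq_span, hs, Algebra.top_toSubmodule]
  refine top_unique (span_closure.ge.trans (Submodule.span_le.2 fun x hx => ?_))
  induction hx using Submonoid.closure_induction_left with
  | one => exact Submodule.mem_sup_left (Submodule.one_le.1 le_rfl)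
  | mul_left x hx y =>
    exact Submodule.mem_sup_right
      (Submodule.mul_mem_mul (Submodule.subset_span hx) Submodule.mem_top)

theorem top_mul_span_mul_top_le (hs : Algebra.adjoin K s = ⊤) :
    ⊤ * Submodule.span K s * ⊤ ≤ Submodule.span K s * ⊤ := by
  set G := Submodule.span K s
  calc ⊤ * G * ⊤ = (1 ⊔ G * ⊤) * G * ⊤ := by rw [one_sup_span_mul_top hs]
    _ = G * ⊤ ⊔ G * (⊤ * G * ⊤) := by
        simp only [Submodule.sup_mul, one_mul, mul_assoc]
    _ ≤ G * ⊤ := sup_le le_rfl (mul_le_mul_right le_top _)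

theorem top_mul_span_mul_top_pow_le (hs : Algebra.adjoin K s = ⊤) (n : ℕ) :
    (⊤ * Submodule.span K s * ⊤) ^ n ≤ Submodule.span K s ^ n * ⊤ := by
  set G := Submodule.span K s
  induction n with
  | zero => simp
  | succ n ih =>
    calc (⊤ * G * ⊤) ^ (n + 1) = (⊤ * G * ⊤) ^ n * (⊤ * G * ⊤) := pow_succ _ _
      _ ≤ G ^ n * ⊤ * (⊤ * G * ⊤) := mul_le_mul_left ih _
      _ = G ^ n * (⊤ * ⊤ * G * ⊤) := by simp only [mul_assoc]
      _ ≤ G ^ n * (⊤ * G * ⊤) :=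
        mul_le_mul_right (mul_le_mul_left (mul_le_mul_left le_top G) ⊤) _
      _ ≤ G ^ n * (G * ⊤) := mul_le_mul_right (top_mul_span_mul_top_le hs) _
      _ = G ^ (n + 1) * ⊤ := by rw [pow_succ, mul_assoc]

end GeneratedAlgebra

section TruncatedPathAlgebra

variable (K : Type*) [Field K] (r L : ℕ)

theorem adjoin_range_gen : Algebra.adjoin K (Set.range (gen K r L)) = ⊤ := by
  let φ : FreeAlgebra K (Fin r) →ₐ[K] TruncAlg K r L := RingQuot.mkAlgHom K (TruncRel K r L)
  have hφ : φ.range = ⊤ := φ.range_eq_top.2 (RingQuot.mkAlgHom_surjective K (TruncRel K r L))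
  have hgen : Set.range (gen K r L) = φ '' Set.range (FreeAlgebra.ι K) := Set.range_comp _ _
  rw [hgen, ← AlgHom.map_adjoin, FreeAlgebra.adjoin_range_ι, Algebra.map_top, hφ]

theorem list_prod_ofFn_gen_eq_zero (f : Fin (L + 1) → Fin r) :
    (List.ofFn fun j => gen K r L (f j)).prod = 0 := by
  let φ : FreeAlgebra K (Fin r) →ₐ[K] TruncAlg K r L := RingQuot.mkAlgHom K (TruncRel K r L)
  have hφ : φ (List.ofFn fun j => FreeAlgebra.ι K (f j)).prod = φ 0 :=
    RingQuot.mkAlgHom_rel K ⟨⟨f, rfl⟩, rfl⟩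
  rwa [map_zero, map_list_prod, List.map_ofFn] at hφ

theorem span_range_gen_pow_eq_bot : Submodule.span K (Set.range (gen K r L)) ^ (L + 1) = ⊥ := by
  rw [Submodule.span_pow, Submodule.span_eq_bot]
  intro x hx
  obtain ⟨g, rfl⟩ := Set.mem_pow.1 hx
  choose f hf using fun j => (g j).2
  simp only [← hf, list_prod_ofFn_gen_eq_zero]

theorem one_sup_jrad : 1 ⊔ Jrad K r L = ⊤ := by
  rw [eq_top_iff, ← one_sup_span_mul_top (adjoin_range_gen K r L), Jrad, mul_assoc]
  exact sup_le_sup_left (le_mul_of_one_le_left' le_top) _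

theorem jrad_pow_eq_bot : Jrad K r L ^ (L + 1) = ⊥ := by
  rw [eq_bot_iff]
  calc Jrad K r L ^ (L + 1) ≤ Submodule.span K (Set.range (gen K r L)) ^ (L + 1) * ⊤ :=
        top_mul_span_mul_top_pow_le (adjoin_range_gen K r L) (L + 1)
    _ = ⊥ := by rw [span_range_gen_pow_eq_bot, Submodule.bot_mul]

theorem top_mul_jrad_le : ⊤ * Jrad K r L ≤ Jrad K r L := by
  simp only [Jrad, ← mul_assoc]
  gcongr
  exact le_top

variable (M : Type*) [AddCommGroup M] [Module K M] [Module (TruncAlg K r L) M]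
  [IsScalarTower K (TruncAlg K r L) M]

theorem restrictScalars_jpow (l : ℕ) :
    (jpow K r L M l).restrictScalars K = Jrad K r L ^ l • (⊤ : Submodule K M) := by
  refine le_antisymm (fun x hx => ?_) (Submodule.smul_le.2 fun a ha m _ =>
    Submodule.subset_span ⟨a, ha, m, rfl⟩)
  induction hx using Submodule.span_induction with
  | mem x hx =>
    obtain ⟨a, ha, m, rfl⟩ := hx
    exact Submodule.smul_mem_smul ha Submodule.mem_top
  | zero => exact zero_mem _
  | add x y _ _ hx hy => exact add_mem hx hy
  | smul b x _ hx =>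
    exact top_smul_pow_smul_top_le (top_mul_jrad_le K r L) l
      (Submodule.smul_mem_smul Submodule.mem_top hx)

theorem revTuple_radLayering :
    revTuple L (radLayering K r L M) =
      layering L fun l => Jrad K r L ^ (L + 1 - l) • (⊤ : Submodule K M) := by
  funext l
  simp only [revTuple, radLayering, layering, restrictScalars_jpow, Fin.val_rev,
    show L + 1 - (l + 1) + 1 = L + 1 - (l : ℕ) by lia]

theorem socLayering_eq_layering :
    socLayering K r L M =
      layering L fun l => (socSeries (TruncAlg K r L) M l).restrictScalars K :=
  rfl

end TruncatedPathAlgebra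

theorem stmt4_general (K : Type*) [Field K] (r L : ℕ) (M : Type*) [AddCommGroup M] [Module K M]
    [Module (TruncAlg K r L) M] [IsScalarTower K (TruncAlg K r L) M] [FiniteDimensional K M] :
    DomLE L (revTuple L (radLayering K r L M)) (socLayering K r L M) ∧
    DomLE L (revTuple L (socLayering K r L M)) (radLayering K r L M) := by
  let P : ℕ → Submodule K M := fun l => Jrad K r L ^ (L + 1 - l) • ⊤
  let S : ℕ → Submodule K M := fun l => (socSeries (TruncAlg K r L) M l).restrictScalars K
  have hP : Monotone P := fun _ _ h => pow_smul_top_antitone _ (Nat.sub_le_sub_left h _)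
  have hS : Monotone S := fun _ _ h => socSeries_monotone _ M h
  have hP₀ : P 0 = ⊥ := by simp only [P, Nat.sub_zero, jrad_pow_eq_bot, Submodule.bot_smul]
  have hP₁ : P (L + 1) = ⊤ := by simp only [P, Nat.sub_self, pow_zero, Submodule.one_smul]
  have hPS (l : ℕ) : P l ≤ S l :=
    pow_smul_top_le_socSeries (one_sup_jrad K r L) (jrad_pow_eq_bot K r L) l
  have hS₁ : S (L + 1) = ⊤ := top_unique (hP₁ ▸ hPS (L + 1))
  have hdom : DomLE L (revTuple L (radLayering K r L M)) (socLayering K r L M) := by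
    rw [revTuple_radLayering, socLayering_eq_layering]
    exact domLE_layering hP hP₀ hS rfl hPS
  have hsum : ∑ j, revTuple L (radLayering K r L M) j = ∑ j, socLayering K r L M j := by
    rw [revTuple_radLayering, socLayering_eq_layering]
    exact (sum_layering hP hP₀ hP₁).trans (sum_layering hS rfl hS₁).symm
  exact ⟨hdom, by simpa only [revTuple_revTuple] using hdom.revTuple_of_sum_eq hsum⟩

/-- For every finite-dimensional `Λ`-module `M`,
`reverse (rad M) ≼ socseq M` and `reverse (socseq M) ≼ rad M` in the dominance order. -/
theorem stmt4 (K : Type) [Field K] [IsAlgClosed K] (r L : ℕ) (hr : 0 < r) (hL : 0 < L)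
    (M : Type) [AddCommGroup M] [Module K M] [Module (TruncAlg K r L) M]
    [IsScalarTower K (TruncAlg K r L) M] [FiniteDimensional K M] :
    DomLE L (revTuple L (radLayering K r L M)) (socLayering K r L M) ∧
    DomLE L (revTuple L (socLayering K r L M)) (radLayering K r L M) :=
  stmt4_general K r L M
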